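/- Let k ≥ 2 be an integer and ϱ ∈ ℍ. Then for every z ∈ ℍ not in the SL₂(ℤ)-orbit of ϱ, the series defining the Petersson Poincaré series η_{k,ϱ}(z) converges absolutely; moreover, the resulting function satisfies η_{k,ϱ}(γz) = (cz+d)^{2k}·η_{k,ϱ}(z) for every γ = (a b; c d) ∈ SL₂(ℤ) and every z ∈ ℍ ∖ SL₂(ℤ)ϱ, and η_{k,γ₀ϱ} = η_{k,ϱ} for every γ₀ ∈ SL₂(ℤ), i.e. η_{k,ϱ} depends only on the SL₂(ℤ)-orbit of ϱ. -/

import Mathlib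

open Complex ComplexConjugate Metric Set MeasureTheory

noncomputable section

/-- The upper half-plane, as a subset of `ℂ`. -/
def UH : Set ℂ := {z | 0 < z.im}

abbrev SL2Z := Matrix.SpecialLinearGroup (Fin 2) ℤ

/-- The Möbius action `γz = (az+b)/(cz+d)` of `SL₂(ℤ)` on the upper half-plane
(written as a map on `ℂ`). -/
def moeb (γ : SL2Z) (z : ℂ) : ℂ :=
  ((γ.1 0 0 : ℂ) * z + (γ.1 0 1 : ℂ)) / ((γ.1 1 0 : ℂ) * z + (γ.1 1 1 : ℂ))

/-- The `SL₂(ℤ)`-orbit of a point `ϱ`. -/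
def orbit (ϱ : ℂ) : Set ℂ := {z | ∃ γ : SL2Z, z = moeb γ ϱ}

/-- A single term of the Petersson Poincaré series:
`((γz − ϱ)(γz − conj ϱ)/(ϱ − conj ϱ))^(−k) · (cz + d)^(−2k)`. -/
def etaTerm (k : ℕ) (ϱ z : ℂ) (γ : SL2Z) : ℂ :=
  ((moeb γ z - ϱ) * (moeb γ z - conj ϱ) / (ϱ - conj ϱ)) ^ (-(k : ℤ)) *
    ((γ.1 1 0 : ℂ) * z + (γ.1 1 1 : ℂ)) ^ (-(2 * k : ℤ))

/-- The Petersson Poincaré series `η_{k,ϱ}(z)`. -/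
def etaP (k : ℕ) (ϱ z : ℂ) : ℂ := (1 / 2 : ℂ) * ∑' γ : SL2Z, etaTerm k ϱ z γ

/-!
In terms of the hyperbolic distance on `ℍ`,
`|(w − ϱ)(w − conj ϱ)| = 2 Im w · Im ϱ · sinh dist(w, ϱ)`. Since `Im γz = Im z / |cz + d|²`, the
automorphy factor cancels and the `γ`-term of `η_{k,ϱ}(z)` has absolute value
`(Im z · sinh dist(γz, ϱ))^(−k)`. Absolute convergence is therefore that of the hyperbolic Poincaré
series `∑ exp(−s dist(γz, ϱ))` at `s = k > 1`; by the triangle inequality `ϱ` may be replaced by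
`i`. A matrix `γ` is determined by its bottom row `(c, d)` and `⌊Re γz⌋`, and
`exp dist(γz, i) ≥ |cz + d|² (1 + (Re γz)²) / (2 Im z)`, so this series is dominated by a product of
a sum over `ℤ²` and a sum over `ℤ`.

Both transformation laws are reindexings of `SL₂(ℤ)`, on the right by `γ` and on the left by `γ₀`.
-/

open UpperHalfPlane Filter

section Moebius

lemma num_div_denom_sub_num_div_denom (g : GL (Fin 2) ℝ) {z w : ℂ}
    (hz : denom g z ≠ 0) (hw : denom g w ≠ 0) :
    num g z / denom g z - num g w / denom g w =
      g.det.val * (z - w) / (denom g z * denom g w) := by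
  rw [div_sub_div _ _ hz hw, Matrix.GeneralLinearGroup.val_det_apply, Matrix.det_fin_two]
  simp only [num, denom, ofReal_sub, ofReal_mul]
  ring

lemma conj_num_div_denom (g : GL (Fin 2) ℝ) (z : ℂ) :
    conj (num g z / denom g z) = num g (conj z) / denom g (conj z) := by
  simp [num, denom]

lemma moeb_coe (γ : SL2Z) (z : ℍ) : moeb γ z = ↑(γ • z) := by
  rw [moeb, coe_specialLinearGroup_apply]
  rfl

lemma denom_mul_smul (γ γ' : SL2Z) (z : ℍ) :
    denom (γ' * γ : SL2Z) z = denom γ' ↑(γ • z) * denom γ z := by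
  rw [ModularGroup.sl_moeb, coe_smul_of_det_pos (by simp), map_mul, map_mul,
    denom_cocycle _ _ z.im_ne_zero]

lemma im_smul_eq_div_norm_denom_sq (γ : SL2Z) (z : ℍ) :
    (γ • z).im = z.im / ‖denom γ z‖ ^ 2 := by
  rw [ModularGroup.im_smul_eq_div_normSq, normSq_eq_norm_sq]

lemma T_zpow_mul_apply_zero (m : ℤ) (γ : SL2Z) (j : Fin 2) :
    (ModularGroup.T ^ m * γ) 0 j = γ 0 j + m * γ 1 j := by
  simp [ModularGroup.coe_T_zpow, Matrix.mul_apply, Fin.sum_univ_two]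

lemma exists_eq_T_zpow_mul_of_row_one_eq {γ γ' : SL2Z} (h : γ 1 = γ' 1) :
    ∃ m : ℤ, γ' = ModularGroup.T ^ m * γ := by
  have hc : γ 1 0 = γ' 1 0 := congrFun h 0
  have hd : γ 1 1 = γ' 1 1 := congrFun h 1
  have hdet : γ 0 0 * γ 1 1 - γ 0 1 * γ 1 0 = 1 := Matrix.det_fin_two γ.1 ▸ γ.det_coe
  have hdet' : γ' 0 0 * γ 1 1 - γ' 0 1 * γ 1 0 = 1 :=
    hc ▸ hd ▸ Matrix.det_fin_two γ'.1 ▸ γ'.det_coe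
  refine ⟨γ 0 0 * γ' 0 1 - γ 0 1 * γ' 0 0, Matrix.SpecialLinearGroup.ext _ _ <|
    Fin.forall_fin_two.2 ⟨Fin.forall_fin_two.2 ⟨?_, ?_⟩, fun j ↦ ?_⟩⟩
  · rw [T_zpow_mul_apply_zero]
    linear_combination γ 0 0 * hdet' - γ' 0 0 * hdet
  · rw [T_zpow_mul_apply_zero]
    linear_combination γ 0 1 * hdet' - γ' 0 1 * hdet
  · rw [ModularGroup.T_pow_mul_apply_one, h]

lemma row_one_floor_re_smul_injective (z : ℍ) :
    Function.Injective fun γ : SL2Z ↦ (γ 1, ⌊(γ • z).re⌋) := by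
  rintro γ γ' h
  obtain ⟨m, rfl⟩ := exists_eq_T_zpow_mul_of_row_one_eq (congrArg Prod.fst h)
  have hfloor : ⌊(γ • z).re⌋ = ⌊(γ • z).re⌋ + m := by
    simpa only [mul_smul, ModularGroup.re_T_zpow_smul, Int.floor_add_intCast]
      using congrArg Prod.snd h
  obtain rfl : m = 0 := by lia
  simp

end Moebius

section PoincareSeries

lemma summable_norm_linear_rpow {s : ℝ} (hs : 2 < s) (z : ℍ) :
    Summable fun x : Fin 2 → ℤ ↦ ‖x 0 * (z : ℂ) + x 1‖ ^ (-s) :=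
  .of_nonneg_of_le (fun _ ↦ by positivity)
    (EisensteinSeries.summand_bound z (by linarith))
    ((EisensteinSeries.summable_one_div_norm_rpow hs).mul_left _)

lemma summable_abs_int_add_rpow {s : ℝ} (hs : 1 < s) (a : ℝ) :
    Summable fun n : ℤ ↦ |n + a| ^ (-s) := by
  simpa only [one_div, ← Real.rpow_neg (abs_nonneg _)]
    using (Real.summable_one_div_int_add_rpow a s).2 hs

lemma summable_norm_denom_rpow_mul_abs_floor_rpow {s : ℝ} (hs : 2 < s) (a : ℝ) (z : ℍ) :
    Summable fun γ : SL2Z ↦ ‖denom γ z‖ ^ (-s) * |(⌊(γ • z).re⌋ : ℝ) + a| ^ (-s) := by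
  have hprod := (summable_norm_linear_rpow hs z).mul_of_nonneg
    (summable_abs_int_add_rpow (by linarith) a) (fun _ ↦ by positivity) (fun _ ↦ by positivity)
  refine (hprod.comp_injective (row_one_floor_re_smul_injective z)).congr fun γ ↦ ?_
  rw [ModularGroup.denom_apply, Function.comp_apply]

-- The shift by `1 / 2` keeps negative powers of an integer variable off the junk value at `0`.
lemma abs_intCast_add_half_pos (n : ℤ) : 0 < |(n : ℝ) + 1 / 2| := by
  refine abs_pos.2 fun h ↦ ?_
  have hodd : 2 * n + 1 = 0 := by exact_mod_cast (by linarith : 2 * (n : ℝ) + 1 = 0)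
  lia

lemma abs_floor_add_half_sq_le (x : ℝ) : |(⌊x⌋ : ℝ) + 1 / 2| ^ 2 ≤ 2 * (x ^ 2 + 1) := by
  have hdist : (⌊x⌋ + 1 / 2 - x) ^ 2 ≤ (1 / 2) ^ 2 :=
    sq_le_sq' (by linarith [Int.lt_floor_add_one x]) (by linarith [Int.floor_le x])
  rw [sq_abs]
  nlinarith [sq_nonneg (⌊x⌋ + 1 / 2 - 2 * x)]

lemma re_sq_add_one_div_le_exp_dist_I (w : ℍ) :
    (w.re ^ 2 + 1) / (2 * w.im) ≤ Real.exp (dist w UpperHalfPlane.I) := by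
  calc (w.re ^ 2 + 1) / (2 * w.im)
      ≤ (w.re ^ 2 + w.im ^ 2 + 1) / (2 * w.im) := by
        gcongr
        linarith [sq_nonneg w.im]
    _ = Real.cosh (dist w UpperHalfPlane.I) := by simp [cosh_dist']
    _ ≤ Real.exp (dist w UpperHalfPlane.I) := by
        rw [← Real.cosh_add_sinh]
        linarith [Real.sinh_nonneg_iff.2 (dist_nonneg (x := w) (y := UpperHalfPlane.I))]

lemma norm_denom_mul_abs_floor_sq_le_exp_dist_smul_I (γ : SL2Z) (z : ℍ) :
    (‖denom γ z‖ * |(⌊(γ • z).re⌋ : ℝ) + 1 / 2|) ^ 2 / (4 * z.im) ≤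
      Real.exp (dist (γ • z) UpperHalfPlane.I) := by
  have hdenom : 0 < ‖denom γ z‖ := norm_pos_iff.2 (denom_ne_zero γ z)
  calc (‖denom γ z‖ * |(⌊(γ • z).re⌋ : ℝ) + 1 / 2|) ^ 2 / (4 * z.im)
      ≤ ‖denom γ z‖ ^ 2 * (2 * ((γ • z).re ^ 2 + 1)) / (4 * z.im) := by
        rw [mul_pow]
        gcongr
        exact abs_floor_add_half_sq_le _
    _ = ((γ • z).re ^ 2 + 1) / (2 * (γ • z).im) := by
        rw [im_smul_eq_div_norm_denom_sq]
        field_simp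
        norm_num
    _ ≤ Real.exp (dist (γ • z) UpperHalfPlane.I) := re_sq_add_one_div_le_exp_dist_I _

lemma exp_neg_mul_dist_smul_I_le {s : ℝ} (hs : 0 ≤ s) (γ : SL2Z) (z : ℍ) :
    Real.exp (-(s * dist (γ • z) UpperHalfPlane.I)) ≤ (4 * z.im) ^ s *
      (‖denom γ z‖ ^ (-(2 * s)) * |(⌊(γ • z).re⌋ : ℝ) + 1 / 2| ^ (-(2 * s))) := by
  have hdenom : 0 < ‖denom γ z‖ := norm_pos_iff.2 (denom_ne_zero γ z)
  have hfloor := abs_intCast_add_half_pos ⌊(γ • z).re⌋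
  set t := ‖denom γ z‖ * |(⌊(γ • z).re⌋ : ℝ) + 1 / 2| with ht
  calc Real.exp (-(s * dist (γ • z) UpperHalfPlane.I))
      = Real.exp (dist (γ • z) UpperHalfPlane.I) ^ (-s) := by
        rw [← Real.exp_mul, mul_neg, mul_comm]
    _ ≤ (t ^ 2 / (4 * z.im)) ^ (-s) :=
        Real.rpow_le_rpow_of_nonpos (by positivity)
          (norm_denom_mul_abs_floor_sq_le_exp_dist_smul_I γ z) (by linarith)
    _ = (4 * z.im) ^ s * t ^ (-(2 * s)) := by
        rw [Real.rpow_neg (by positivity), ← Real.inv_rpow (by positivity), inv_div,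
          Real.div_rpow (by positivity) (by positivity), ← Real.rpow_natCast_mul (by positivity),
          Real.rpow_neg (by positivity), div_eq_mul_inv, Nat.cast_ofNat]
    _ = _ := by rw [ht, Real.mul_rpow (norm_nonneg _) (abs_nonneg _)]

lemma summable_exp_neg_mul_dist_smul {s : ℝ} (hs : 1 < s) (z w : ℍ) :
    Summable fun γ : SL2Z ↦ Real.exp (-(s * dist (γ • z) w)) := by
  have hI : Summable fun γ : SL2Z ↦ Real.exp (-(s * dist (γ • z) UpperHalfPlane.I)) :=
    .of_nonneg_of_le (fun _ ↦ by positivity)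
      (fun γ ↦ exp_neg_mul_dist_smul_I_le (by linarith) γ z)
      ((summable_norm_denom_rpow_mul_abs_floor_rpow (by linarith) _ z).mul_left _)
  refine .of_nonneg_of_le (fun _ ↦ by positivity) (fun γ ↦ ?_)
    (hI.mul_left (Real.exp (s * dist w UpperHalfPlane.I)))
  rw [← Real.exp_add, Real.exp_le_exp]
  nlinarith [dist_triangle (γ • z) w UpperHalfPlane.I]

lemma tendsto_dist_smul_cofinite_atTop (z w : ℍ) :
    Tendsto (fun γ : SL2Z ↦ dist (γ • z) w) cofinite atTop := by
  have hexp := (summable_exp_neg_mul_dist_smul one_lt_two z w).tendsto_cofinite_zero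
  rw [Real.tendsto_exp_comp_nhds_zero, tendsto_neg_atBot_iff] at hexp
  exact (tendsto_const_mul_atTop_of_pos two_pos).1 hexp

lemma exp_le_four_mul_sinh {x : ℝ} (hx : 1 ≤ x) : Real.exp x ≤ 4 * Real.sinh x := by
  have hneg : Real.exp (-x) ≤ 1 := Real.exp_le_one_iff.2 (by linarith)
  rw [Real.sinh_eq]
  linarith [Real.add_one_le_exp x]

lemma summable_sinh_dist_smul_rpow {s : ℝ} (hs : 1 < s) (z w : ℍ) :
    Summable fun γ : SL2Z ↦ Real.sinh (dist (γ • z) w) ^ (-s) := by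
  refine .of_norm_bounded_eventually
    ((summable_exp_neg_mul_dist_smul hs z w).mul_left (4⁻¹ ^ (-s))) ?_
  filter_upwards [(tendsto_dist_smul_cofinite_atTop z w).eventually_ge_atTop 1] with γ hγ
  have hsinh : 4⁻¹ * Real.exp (dist (γ • z) w) ≤ Real.sinh (dist (γ • z) w) := by
    linarith [exp_le_four_mul_sinh hγ]
  rw [Real.norm_of_nonneg (Real.rpow_nonneg (Real.sinh_nonneg_iff.2 dist_nonneg) _)]
  calc Real.sinh (dist (γ • z) w) ^ (-s)
      ≤ (4⁻¹ * Real.exp (dist (γ • z) w)) ^ (-s) :=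
        Real.rpow_le_rpow_of_nonpos (by positivity) hsinh (by linarith)
    _ = 4⁻¹ ^ (-s) * Real.exp (-(s * dist (γ • z) w)) := by
        rw [Real.mul_rpow (by positivity) (by positivity), ← Real.exp_mul, mul_neg, mul_comm s]

end PoincareSeries

section PeterssonKernel

/-- The quadratic polynomial `(z − ϱ)(z − conj ϱ)/(ϱ − conj ϱ)` in `z` with roots `ϱ` and `conj ϱ`,
whose `(-k)`-th power is averaged over `SL₂(ℤ)` to form `η_{k,ϱ}`. -/
def peterssonKernel (ϱ z : ℂ) : ℂ := (z - ϱ) * (z - conj ϱ) / (ϱ - conj ϱ)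

lemma norm_peterssonKernel (ϱ z : ℍ) :
    ‖peterssonKernel ϱ z‖ = z.im * Real.sinh (dist z ϱ) := by
  have hsinh : Real.sinh (dist z ϱ) =
      dist (z : ℂ) ϱ * dist (z : ℂ) (conj (ϱ : ℂ)) / (2 * (z.im * ϱ.im)) := by
    rw [← mul_div_cancel₀ (dist z ϱ) two_ne_zero, mul_div_assoc, Real.sinh_two_mul,
      sinh_half_dist, cosh_half_dist]
    have hsqrt := Real.sq_sqrt (mul_pos z.im_pos ϱ.im_pos).le
    field_simp
    rw [hsqrt]
    ring
  have hϱ : ‖(ϱ : ℂ) - conj (ϱ : ℂ)‖ = 2 * ϱ.im := by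
    simp [sub_conj, abs_of_pos ϱ.im_pos]
  rw [peterssonKernel, norm_div, norm_mul, hϱ, hsinh, dist_eq_norm, dist_eq_norm]
  field_simp

lemma peterssonKernel_smul {g : GL (Fin 2) ℝ} (hg : 0 < g.det.val) (ϱ z : ℍ) :
    peterssonKernel ↑(g • ϱ) ↑(g • z) = g.det.val * peterssonKernel ϱ z / denom g z ^ 2 := by
  have hz := denom_ne_zero g z
  have hϱ := denom_ne_zero g ϱ
  have hϱconj : denom g (conj (ϱ : ℂ)) ≠ 0 :=
    denom_ne_zero_of_im g (by simpa using ϱ.im_ne_zero)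
  have hdet : (g.det.val : ℂ) ≠ 0 := ofReal_ne_zero.2 hg.ne'
  have hsub : (ϱ : ℂ) - conj (ϱ : ℂ) ≠ 0 := by simpa [sub_conj] using ϱ.im_ne_zero
  simp only [peterssonKernel, coe_smul_of_det_pos hg, conj_num_div_denom]
  rw [num_div_denom_sub_num_div_denom g hz hϱ, num_div_denom_sub_num_div_denom g hz hϱconj,
    num_div_denom_sub_num_div_denom g hϱ hϱconj]
  field_simp

end PeterssonKernel

section PeterssonPoincareSeries

variable (k : ℕ)

lemma etaTerm_coe (ϱ : ℂ) (z : ℍ) (γ : SL2Z) :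
    etaTerm k ϱ z γ =
      peterssonKernel ϱ ↑(γ • z) ^ (-(k : ℤ)) * denom γ z ^ (-(2 * k : ℤ)) := by
  rw [etaTerm, moeb_coe, peterssonKernel, ModularGroup.denom_apply]

lemma norm_etaTerm (ϱ z : ℍ) (γ : SL2Z) :
    ‖etaTerm k ϱ z γ‖ = (z.im * Real.sinh (dist (γ • z) ϱ)) ^ (-(k : ℤ)) := by
  have hdenom : ‖denom γ z‖ ≠ 0 := norm_ne_zero_iff.2 (denom_ne_zero γ z)
  rw [etaTerm_coe, norm_mul, norm_zpow, norm_zpow, norm_peterssonKernel,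
    im_smul_eq_div_norm_denom_sq, ← mul_neg, zpow_mul, ← mul_zpow, zpow_ofNat]
  field_simp

variable {k} in
lemma summable_norm_etaTerm (hk : 2 ≤ k) (ϱ z : ℍ) :
    Summable fun γ : SL2Z ↦ ‖etaTerm k ϱ z γ‖ := by
  have hsinh := summable_sinh_dist_smul_rpow (Nat.one_lt_cast.2 hk) z ϱ
  refine (hsinh.mul_left (z.im ^ (-(k : ℤ)))).congr fun γ ↦ ?_
  rw [norm_etaTerm, mul_zpow, ← Real.rpow_intCast (Real.sinh _), Int.cast_neg, Int.cast_natCast]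

lemma etaTerm_smul (ϱ : ℂ) (z : ℍ) (γ γ' : SL2Z) :
    etaTerm k ϱ ↑(γ • z) γ' = denom γ z ^ (2 * k) * etaTerm k ϱ z (γ' * γ) := by
  have hdenom := denom_ne_zero γ z
  have hpow : denom γ z ^ (2 * k) * denom γ z ^ (-(2 * k : ℤ)) = 1 := by
    rw [← zpow_natCast, ← zpow_add₀ hdenom]
    simp
  rw [etaTerm_coe, etaTerm_coe, mul_smul, denom_mul_smul, mul_zpow]
  linear_combination (-peterssonKernel ϱ ↑(γ' • γ • z) ^ (-(k : ℤ)) *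
    denom γ' ↑(γ • z) ^ (-(2 * k : ℤ))) * hpow

lemma etaTerm_smul_mul (ϱ z : ℍ) (γ₀ γ : SL2Z) :
    etaTerm k ↑(γ₀ • ϱ) z (γ₀ * γ) = etaTerm k ϱ z γ := by
  have hdenom := denom_ne_zero γ₀ (γ • z)
  have hkernel : peterssonKernel ↑(γ₀ • ϱ) ↑(γ₀ • γ • z) =
      peterssonKernel ϱ ↑(γ • z) / denom γ₀ ↑(γ • z) ^ 2 := by
    simpa using! peterssonKernel_smul (g := γ₀) (by simp) ϱ (γ • z)
  rw [etaTerm_coe, etaTerm_coe, mul_smul, denom_mul_smul, hkernel, ← mul_neg, zpow_mul, zpow_mul,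
    ← mul_zpow, ← mul_zpow, zpow_ofNat, zpow_ofNat]
  congr 1
  field_simp

lemma etaP_smul (ϱ : ℂ) (z : ℍ) (γ : SL2Z) :
    etaP k ϱ ↑(γ • z) = denom γ z ^ (2 * k) * etaP k ϱ z := by
  simp only [etaP, etaTerm_smul, tsum_mul_left, ← (Equiv.mulRight γ).tsum_eq (etaTerm k ϱ z),
    Equiv.coe_mulRight]
  ring

lemma etaP_smul_left (ϱ z : ℍ) (γ₀ : SL2Z) : etaP k ↑(γ₀ • ϱ) z = etaP k ϱ z := by
  simp only [etaP, ← (Equiv.mulLeft γ₀).tsum_eq (etaTerm k ↑(γ₀ • ϱ) z), Equiv.coe_mulLeft,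
    etaTerm_smul_mul]

end PeterssonPoincareSeries

/-- For `k ≥ 2` and `ϱ ∈ ℍ`, the Petersson Poincaré series `η_{k,ϱ}` converges absolutely
on `ℍ ∖ SL₂(ℤ)ϱ`, transforms like a modular form of weight `2k` for `SL₂(ℤ)`, and depends
only on the `SL₂(ℤ)`-orbit of `ϱ`. -/
theorem etaP_convergence_and_modularity (k : ℕ) (hk : 2 ≤ k) (ϱ : ℂ) (hϱ : ϱ ∈ UH) :
    (∀ z ∈ UH \ orbit ϱ, Summable fun γ : SL2Z => ‖etaTerm k ϱ z γ‖) ∧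
    (∀ γ : SL2Z, ∀ z ∈ UH \ orbit ϱ,
      etaP k ϱ (moeb γ z) = ((γ.1 1 0 : ℂ) * z + (γ.1 1 1 : ℂ)) ^ (2 * k) * etaP k ϱ z) ∧
    (∀ γ₀ : SL2Z, ∀ z ∈ UH \ orbit ϱ, etaP k (moeb γ₀ ϱ) z = etaP k ϱ z) := by
  lift ϱ to ℍ using hϱ
  refine ⟨fun z hz ↦ ?_, fun γ z hz ↦ ?_, fun γ₀ z hz ↦ ?_⟩ <;> lift z to ℍ using hz.1
  · exact summable_norm_etaTerm hk ϱ z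
  · rw [moeb_coe, etaP_smul, ModularGroup.denom_apply]
  · rw [moeb_coe, etaP_smul_left]
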